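/- arXiv:2005.09269 — 4 statements merged into one kernel-verified Lean document; each statement's English description precedes it below -/
import Mathlib

section
/- Let H = {rrb, bby, rby} (the patterns: a triangle with two red edges and one blue edge, a triangle with two blue edges and one yellow edge, and a rainbow triangle with one edge of each color). Then h_2(n, H) = Θ(n^{2/3}): there exist constants C1, C2 > 0 and an integer n0 such that for all n ≥ n0, C1·n^{2/3} ≤ h_2(n, H) ≤ C2·n^{2/3}. -/
/-- The three edge colors: red, blue, yellow. -/
inductive Col : Type
  | r | b | y
  deriving DecidableEq

/-- A (symmetric) 3-edge-coloring of the complete graph `K_n` on vertex set `Fin n`. -/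
structure Coloring (n : ℕ) where
  col : Fin n → Fin n → Col
  symm : ∀ i j, col i j = col j i

/-- The pattern (multiset of edge colors) of the triangle on vertices `u, v, w`. -/
def triPattern {n : ℕ} (c : Coloring n) (u v w : Fin n) : Multiset Col :=
  {c.col u v, c.col v w, c.col u w}

/-- The coloring `c` contains the pattern `P`: some triangle has color multiset `P`. -/
def Contains {n : ℕ} (c : Coloring n) (P : Multiset Col) : Prop :=
  ∃ u v w : Fin n, u ≠ v ∧ v ≠ w ∧ u ≠ w ∧ triPattern c u v w = P

/-- The coloring `c` avoids every pattern in the family `H`. -/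
def Avoids {n : ℕ} (c : Coloring n) (H : Set (Multiset Col)) : Prop :=
  ∀ P ∈ H, ¬ Contains c P

/-- A vertex set `S` is two-colored under `c`: the edges inside `S` use at most
two of the three colors, i.e. some color is missing on the edges inside `S`. -/
def TwoColored {n : ℕ} (c : Coloring n) (S : Finset (Fin n)) : Prop :=
  ∃ x : Col, ∀ i ∈ S, ∀ j ∈ S, i ≠ j → c.col i j ≠ x

/-- `h2 c` is the maximum size of a vertex set whose induced edges use at most
two of the three colors. -/
noncomputable def h2 {n : ℕ} (c : Coloring n) : ℕ :=
  sSup {k | ∃ S : Finset (Fin n), TwoColored c S ∧ S.card = k}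

/-- `h2n n H = min { h2 c : c a 3-edge-coloring of K_n avoiding all patterns in H }`. -/
noncomputable def h2n (n : ℕ) (H : Set (Multiset Col)) : ℕ :=
  sInf {m | ∃ c : Coloring n, Avoids c H ∧ h2 c = m}

/-- Pattern abbreviations. -/
def Prrr : Multiset Col := {Col.r, Col.r, Col.r}
def Pbbb : Multiset Col := {Col.b, Col.b, Col.b}
def Pyyy : Multiset Col := {Col.y, Col.y, Col.y}
def Prrb : Multiset Col := {Col.r, Col.r, Col.b}
def Prry : Multiset Col := {Col.r, Col.r, Col.y}
def Pbbr : Multiset Col := {Col.b, Col.b, Col.r}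
def Pbby : Multiset Col := {Col.b, Col.b, Col.y}
def Pyyr : Multiset Col := {Col.y, Col.y, Col.r}
def Pyyb : Multiset Col := {Col.y, Col.y, Col.b}
def Prby : Multiset Col := {Col.r, Col.b, Col.y}

/-!
Order the colors by red < blue < yellow. The forbidden triangles are those that have no repeated
largest color, except for `rry`; so up to `rry` an avoiding coloring is an ultrametric. A triangle
`rry` whose red edges meet at `v` cannot coexist with a blue edge at `v`, hence on the vertices
incident with a blue edge the coloring consists of two nested partitions: yellow between the coarse
parts, blue between the fine parts of a coarse part, red inside the fine parts.

If `M` bounds the two-colored sets, a coarse part `a` has at most `M` vertices, and also at most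
`p a * q a`, with `p a` the number of its fine parts and `q a` the size of the largest. Both
`∑ p a` and `∑ q a` are at most `M`, being the sizes of a red-free and of a blue-free set, and
Cauchy–Schwarz gives at most `M ^ (3 / 2)` vertices. The vertices without a blue edge form a
blue-free set, so there are at most `M` of them. The bound is attained up to a constant by `k`
coarse parts, each made of `k` fine parts of size `k`.
-/

open Finset

theorem card_le_h2 {n : ℕ} {c : Coloring n} {S : Finset (Fin n)} (hS : TwoColored c S) :
    #S ≤ h2 c := by
  refine le_csSup ⟨n, ?_⟩ ⟨S, hS, rfl⟩
  rintro _ ⟨T, -, rfl⟩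
  simpa using card_le_univ T

theorem h2_le {n m : ℕ} {c : Coloring n} (h : ∀ S, TwoColored c S → #S ≤ m) : h2 c ≤ m := by
  refine csSup_le ⟨0, ∅, ⟨Col.r, by simp⟩, card_empty⟩ ?_
  rintro _ ⟨S, hS, rfl⟩
  exact h S hS

theorem avoids_iff_of_blue {n : ℕ} {c : Coloring n} :
    Avoids c {Prrb, Pbby, Prby} ↔
      ∀ u v w, u ≠ v → v ≠ w → u ≠ w → c.col u v = Col.b →
        (c.col u w = Col.y → c.col v w = Col.y) ∧ (c.col u w = Col.r → c.col v w = Col.b) := by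
  constructor
  · intro hc u v w huv hvw huw hb
    have hmem : triPattern c u v w ∉ ({Prrb, Pbby, Prby} : Set (Multiset Col)) :=
      fun hP ↦ hc _ hP ⟨u, v, w, huv, hvw, huw, rfl⟩
    simp only [triPattern, hb, Set.mem_insert_iff, Set.mem_singleton_iff] at hmem
    revert hmem
    cases c.col u w <;> cases c.col v w <;> decide
  · rintro h _ hP ⟨u, v, w, huv, hvw, huw, rfl⟩
    have huv_blue := h u v w huv hvw huw
    have hvw_blue := h v w u hvw huw.symm huv.symm
    have hwu_blue := h w u v huw.symm huv hvw.symm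
    simp only [c.symm w u, c.symm w v, c.symm v u] at huv_blue hvw_blue hwu_blue
    simp only [triPattern, Set.mem_insert_iff, Set.mem_singleton_iff] at hP
    revert huv_blue hvw_blue hwu_blue hP
    cases c.col u v <;> cases c.col v w <;> cases c.col u w <;> decide

section NestedCol

variable {α β γ : Type*} [DecidableEq α] [DecidableEq β]

/-- The color of an edge in a coloring by two nested partitions. The values `x`, `y` are the fine
parts containing its endpoints, and `π` sends a fine part to the coarse part that contains it. -/
def nestedCol (π : β → α) (x y : β) : Col :=
  if x = y then Col.r else if π x = π y then Col.b else Col.y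

theorem nestedCol_comm (π : β → α) (x y : β) : nestedCol π x y = nestedCol π y x := by
  simp only [nestedCol, eq_comm]

theorem nestedCol_eq_r_iff {π : β → α} {x y : β} : nestedCol π x y = Col.r ↔ x = y := by
  grind [nestedCol]

theorem nestedCol_eq_b_iff {π : β → α} {x y : β} :
    nestedCol π x y = Col.b ↔ x ≠ y ∧ π x = π y := by
  grind [nestedCol]

theorem nestedCol_eq_y_iff {π : β → α} {x y : β} : nestedCol π x y = Col.y ↔ π x ≠ π y := by
  grind [nestedCol]

/-- The coloring by two nested partitions in which vertex `i` lies in the fine part `g i`, hence in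
the coarse part `π (g i)`. -/
def nestedColoring {n : ℕ} (π : β → α) (g : Fin n → β) : Coloring n where
  col i j := nestedCol π (g i) (g j)
  symm i j := nestedCol_comm π (g i) (g j)

theorem nestedColoring_avoids {n : ℕ} (π : β → α) (g : Fin n → β) :
    Avoids (nestedColoring π g) {Prrb, Pbby, Prby} := by
  refine avoids_iff_of_blue.2 fun u v w _ _ _ hb ↦ ?_
  simp only [nestedColoring, nestedCol_eq_b_iff, nestedCol_eq_r_iff, nestedCol_eq_y_iff] at hb ⊢
  obtain ⟨hg, hπ⟩ := hb
  exact ⟨fun h ↦ hπ ▸ h, fun h ↦ h ▸ ⟨hg.symm, hπ.symm⟩⟩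

theorem h2_nestedColoring_le [Fintype α] [Fintype β] [Fintype γ] {n m : ℕ}
    (e : Fin n ↪ (α × β) × γ) (hαβ : Fintype.card α * Fintype.card β ≤ m)
    (hαγ : Fintype.card α * Fintype.card γ ≤ m) (hβγ : Fintype.card β * Fintype.card γ ≤ m) :
    h2 (nestedColoring Prod.fst fun i ↦ (e i).1) ≤ m := by
  refine h2_le ?_
  rintro S ⟨x, hx⟩
  -- Without color `x`, two of the three coordinates determine a vertex of `S`.
  cases x with
  | r =>
    have hinj : Set.InjOn (fun i ↦ (e i).1) S := fun i hi j hj hij ↦ by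
      by_contra hne
      exact hx i hi j hj hne (nestedCol_eq_r_iff.2 hij)
    exact (card_le_card_of_injOn _ (fun _ _ ↦ mem_univ _) hinj).trans (by simpa using hαβ)
  | b =>
    have hinj : Set.InjOn (fun i ↦ ((e i).1.1, (e i).2)) S := fun i hi j hj hij ↦ by
      by_contra hne
      obtain ⟨hα, hγ⟩ := Prod.ext_iff.1 hij
      exact hx i hi j hj hne
        (nestedCol_eq_b_iff.2 ⟨fun hαβ ↦ hne (e.injective (Prod.ext hαβ hγ)), hα⟩)
    exact (card_le_card_of_injOn _ (fun _ _ ↦ mem_univ _) hinj).trans (by simpa using hαγ)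
  | y =>
    have hinj : Set.InjOn (fun i ↦ ((e i).1.2, (e i).2)) S := fun i hi j hj hij ↦ by
      by_contra hne
      obtain ⟨hβ, hγ⟩ := Prod.ext_iff.1 hij
      exact hx i hi j hj hne
        (nestedCol_eq_y_iff.2 fun hα ↦ hne (e.injective (Prod.ext (Prod.ext hα hβ) hγ)))
    exact (card_le_card_of_injOn _ (fun _ _ ↦ mem_univ _) hinj).trans (by simpa using hβγ)

end NestedCol

theorem exists_avoids_h2_le_sq {n k : ℕ} (hnk : n ≤ k ^ 3) :
    ∃ c : Coloring n, Avoids c {Prrb, Pbby, Prby} ∧ h2 c ≤ k ^ 2 := by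
  obtain ⟨e⟩ : Nonempty (Fin n ↪ (Fin k × Fin k) × Fin k) :=
    Function.Embedding.nonempty_of_card_le (by simpa [pow_succ] using hnk)
  have hcard : Fintype.card (Fin k) * Fintype.card (Fin k) ≤ k ^ 2 := by simp [sq]
  exact ⟨_, nestedColoring_avoids _ _, h2_nestedColoring_le e hcard hcard hcard⟩

section Tower

variable {ι α β : Type*} [DecidableEq β]

theorem exists_section_card_fiber_le [Nonempty β] (S : Finset ι) (g : ι → β) (π : β → α) :
    ∃ σ : α → β, ∀ i ∈ S, π (σ (π (g i))) = π (g i) ∧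
      #{j ∈ S | g j = g i} ≤ #{j ∈ S | g j = σ (π (g i))} := by
  classical
  have hmax : ∀ a ∈ S.image (π ∘ g), ∃ x, π x = a ∧
      ∀ i ∈ S, π (g i) = a → #{j ∈ S | g j = g i} ≤ #{j ∈ S | g j = x} := by
    intro a ha
    obtain ⟨i₀, hi₀, rfl⟩ := mem_image.1 ha
    obtain ⟨i, hi, hle⟩ := exists_max_image {i ∈ S | π (g i) = (π ∘ g) i₀}
      (fun i ↦ #{j ∈ S | g j = g i}) ⟨i₀, mem_filter.2 ⟨hi₀, rfl⟩⟩
    exact ⟨g i, (mem_filter.1 hi).2, fun j hj hja ↦ hle j (mem_filter.2 ⟨hj, hja⟩)⟩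
  choose! σ hσ hle using hmax
  exact ⟨σ, fun i hi ↦ ⟨hσ _ (mem_image_of_mem _ hi), hle _ (mem_image_of_mem _ hi) i hi rfl⟩⟩

theorem card_fiber_le_mul_card_filter_image [DecidableEq α] {S : Finset ι} {g : ι → β}
    {π : β → α} {a : α} {m : ℕ} (hm : ∀ i ∈ S, π (g i) = a → #{j ∈ S | g j = g i} ≤ m) :
    #{i ∈ S | π (g i) = a} ≤ m * #{x ∈ S.image g | π x = a} := by
  refine card_le_mul_card_image_of_maps_to (f := g) ?_ _ ?_
  · intro i hi
    obtain ⟨hiS, hia⟩ := mem_filter.1 hi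
    exact mem_filter.2 ⟨mem_image_of_mem g hiS, hia⟩
  · intro x hx
    obtain ⟨hxS, hxa⟩ := mem_filter.1 hx
    obtain ⟨i, hi, rfl⟩ := mem_image.1 hxS
    exact (card_le_card (filter_subset_filter _ (filter_subset _ _))).trans (hm i hi hxa)

theorem card_sq_le_pow_three_of_tower [DecidableEq α] (S : Finset ι) (g : ι → β) (π : β → α) {M : ℕ}
    (hfiber : ∀ a, #{i ∈ S | π (g i) = a} ≤ M) (himage : #(S.image g) ≤ M)
    (hsection : ∀ σ : α → β, #{i ∈ S | g i = σ (π (g i))} ≤ M) :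
    #S ^ 2 ≤ M ^ 3 := by
  obtain rfl | ⟨i₀, -⟩ := S.eq_empty_or_nonempty
  · simp
  have : Nonempty β := ⟨g i₀⟩
  obtain ⟨σ, hσ⟩ := exists_section_card_fiber_le S g π
  set A := S.image (π ∘ g)
  let p (a : α) : ℕ := #{x ∈ S.image g | π x = a}
  let q (a : α) : ℕ := #{i ∈ S | g i = σ a}
  have hmaps : ∀ i ∈ S, π (g i) ∈ A := fun i hi ↦ mem_image_of_mem (π ∘ g) hi
  have hp : ∑ a ∈ A, p a = #(S.image g) :=
    (card_eq_sum_card_fiberwise fun x hx ↦ by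
      obtain ⟨i, hi, rfl⟩ := mem_image.1 hx
      exact hmaps i hi).symm
  have hq : ∑ a ∈ A, q a = #{i ∈ S | g i = σ (π (g i))} := by
    rw [card_eq_sum_card_fiberwise fun i hi ↦ hmaps i (mem_filter.1 hi).1]
    refine sum_congr rfl fun a ha ↦ congrArg card ?_
    obtain ⟨j, hj, rfl⟩ := mem_image.1 ha
    have hσj : π (σ (π (g j))) = π (g j) := (hσ j hj).1
    ext i
    simp only [mem_filter, Function.comp_apply]
    grind
  have hpq (a : α) : #{i ∈ S | π (g i) = a} ≤ q a * p a :=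
    card_fiber_le_mul_card_filter_image fun i hi hia ↦ hia ▸ (hσ i hi).2
  calc #S ^ 2 = (∑ a ∈ A, #{i ∈ S | π (g i) = a}) ^ 2 := by
        rw [card_eq_sum_card_fiberwise hmaps]
    _ ≤ (∑ a ∈ A, M * p a) * ∑ a ∈ A, q a := by
        refine sum_sq_le_sum_mul_sum_of_sq_le_mul A (fun _ _ ↦ zero_le) (fun _ _ ↦ zero_le)
          fun a _ ↦ ?_
        calc #{i ∈ S | π (g i) = a} ^ 2 ≤ M * (q a * p a) := by
              rw [sq]; exact Nat.mul_le_mul (hfiber a) (hpq a)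
          _ = M * p a * q a := by ring
    _ ≤ M * M * M := by
        rw [← mul_sum, hp, hq]
        gcongr
        exact hsection σ
    _ = M ^ 3 := by ring

end Tower

theorem card_sq_le_h2_pow_three {n : ℕ} {α β : Type*} [DecidableEq α] [DecidableEq β]
    {c : Coloring n} {S : Finset (Fin n)} (π : β → α) (g : Fin n → β)
    (hS : ∀ i ∈ S, ∀ j ∈ S, i ≠ j → c.col i j = nestedCol π (g i) (g j)) :
    #S ^ 2 ≤ h2 c ^ 3 := by
  refine card_sq_le_pow_three_of_tower S g π (fun a ↦ ?_) ?_ fun σ ↦ ?_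
  · refine card_le_h2 ⟨Col.y, fun i hi j hj hij ↦ ?_⟩
    obtain ⟨hiS, hia⟩ := mem_filter.1 hi
    obtain ⟨hjS, hja⟩ := mem_filter.1 hj
    rw [hS i hiS j hjS hij, Ne, nestedCol_eq_y_iff, not_not, hia, hja]
  · obtain ⟨T, hTS, hTinj, hTimage⟩ := exists_subset_injOn_image_eq_of_surjOn S (S.image g) (by
      simpa using Set.surjOn_image g S)
    rw [← hTimage, card_image_of_injOn hTinj]
    refine card_le_h2 ⟨Col.r, fun i hi j hj hij ↦ ?_⟩
    rw [hS i (hTS hi) j (hTS hj) hij, Ne, nestedCol_eq_r_iff]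
    exact fun h ↦ hij (hTinj hi hj h)
  · refine card_le_h2 ⟨Col.b, fun i hi j hj hij ↦ ?_⟩
    obtain ⟨hiS, hiσ⟩ := mem_filter.1 hi
    obtain ⟨hjS, hjσ⟩ := mem_filter.1 hj
    rw [hS i hiS j hjS hij, Ne, nestedCol_eq_b_iff]
    exact fun ⟨hne, hπ⟩ ↦ hne (by rw [hiσ, hjσ, hπ])

/-- `u` is incident with a blue edge. The condition `u ≠ v` is needed because `c.col u u` is
arbitrary. -/
def Coloring.HasBlueEdge {n : ℕ} (c : Coloring n) (u : Fin n) : Prop :=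
  ∃ v, u ≠ v ∧ c.col u v = Col.b

section Avoids

variable {n : ℕ} {c : Coloring n}

theorem Avoids.col_eq_y_of_b_of_y (hc : Avoids c {Prrb, Pbby, Prby}) {u v w : Fin n}
    (huv : u ≠ v) (hvw : v ≠ w) (huw : u ≠ w) (hb : c.col u v = Col.b) (hy : c.col u w = Col.y) :
    c.col v w = Col.y :=
  (avoids_iff_of_blue.1 hc u v w huv hvw huw hb).1 hy

theorem Avoids.col_eq_b_of_b_of_r (hc : Avoids c {Prrb, Pbby, Prby}) {u v w : Fin n}
    (huv : u ≠ v) (hvw : v ≠ w) (huw : u ≠ w) (hb : c.col u v = Col.b) (hr : c.col u w = Col.r) :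
    c.col v w = Col.b :=
  (avoids_iff_of_blue.1 hc u v w huv hvw huw hb).2 hr

theorem Avoids.col_eq_r_trans (hc : Avoids c {Prrb, Pbby, Prby}) {u v w : Fin n}
    (hv : c.HasBlueEdge v) (huv : u ≠ v) (hvw : v ≠ w) (huw : u ≠ w) (huv_r : c.col u v = Col.r)
    (hvw_r : c.col v w = Col.r) : c.col u w = Col.r := by
  obtain ⟨x, hvx, hvx_b⟩ := hv
  have hvu_r : c.col v u = Col.r := c.symm u v ▸ huv_r
  have hxu : x ≠ u := by rintro rfl; simp [hvx_b] at hvu_r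
  have hxw : x ≠ w := by rintro rfl; simp [hvx_b] at hvw_r
  have hxu_b : c.col x u = Col.b := hc.col_eq_b_of_b_of_r hvx hxu huv.symm hvx_b hvu_r
  have hxw_b : c.col x w = Col.b := hc.col_eq_b_of_b_of_r hvx hxw hvw hvx_b hvw_r
  cases huw_col : c.col u w with
  | r => rfl
  | b =>
    have hwv_b := hc.col_eq_b_of_b_of_r huw hvw.symm huv huw_col huv_r
    simp [c.symm w v, hvw_r] at hwv_b
  | y =>
    have hxw_y := hc.col_eq_y_of_b_of_y hxu.symm hxw huw (c.symm x u ▸ hxu_b) huw_col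
    simp [hxw_b] at hxw_y

theorem Avoids.col_ne_y_trans (hc : Avoids c {Prrb, Pbby, Prby}) {u v w : Fin n}
    (hv : c.HasBlueEdge v) (huv : u ≠ v) (hvw : v ≠ w) (huw : u ≠ w) (huv_y : c.col u v ≠ Col.y)
    (hvw_y : c.col v w ≠ Col.y) : c.col u w ≠ Col.y := by
  intro huw_y
  cases huv_col : c.col u v with
  | y => exact huv_y huv_col
  | b => exact hvw_y (hc.col_eq_y_of_b_of_y huv hvw huw huv_col huw_y)
  | r =>
    cases hvw_col : c.col v w with
    | y => exact hvw_y hvw_col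
    | b =>
      refine huv_y (c.symm v u ▸ hc.col_eq_y_of_b_of_y hvw.symm huv.symm huw.symm ?_ ?_)
      · rwa [c.symm]
      · rwa [c.symm]
    | r => simp [hc.col_eq_r_trans hv huv hvw huw huv_col hvw_col] at huw_y

end Avoids

theorem exists_eq_iff_of_trans_on {ι : Type*} (S : Set ι) (R : ι → ι → Prop)
    (hsymm : ∀ i j, R i j → R j i)
    (htrans : ∀ i j k, j ∈ S → i ≠ j → j ≠ k → i ≠ k → R i j → R j k → R i k) :
    ∃ f : ι → ι, ∀ i ∈ S, ∀ j ∈ S, i ≠ j → (f i = f j ↔ R i j) := by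
  let s : Setoid ι :=
    { r i j := i = j ∨ i ∈ S ∧ j ∈ S ∧ R i j
      iseqv :=
        { refl i := Or.inl rfl
          symm := by
            rintro i j (rfl | ⟨hi, hj, hij⟩)
            · exact Or.inl rfl
            · exact Or.inr ⟨hj, hi, hsymm i j hij⟩
          trans := by
            intro i j k hij hjk
            by_cases hij_ne : i = j
            · exact hij_ne ▸ hjk
            by_cases hjk_ne : j = k
            · exact hjk_ne ▸ hij
            by_cases hik_ne : i = k
            · exact Or.inl hik_ne
            obtain ⟨hi, hj, hij_R⟩ := hij.resolve_left hij_ne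
            obtain ⟨-, hk, hjk_R⟩ := hjk.resolve_left hjk_ne
            exact Or.inr ⟨hi, hk, htrans i j k hj hij_ne hjk_ne hik_ne hij_R hjk_R⟩ } }
  refine ⟨fun i ↦ (Quotient.mk s i).out, fun i hi j hj hij ↦ ?_⟩
  rw [Quotient.out_inj, Quotient.eq]
  exact ⟨fun h ↦ (h.resolve_left hij).2.2, fun h ↦ Or.inr ⟨hi, hj, h⟩⟩

theorem Avoids.exists_col_eq_nestedCol {n : ℕ} {c : Coloring n}
    (hc : Avoids c {Prrb, Pbby, Prby}) :
    ∃ g : Fin n → Fin n × Fin n, ∀ i j, c.HasBlueEdge i → c.HasBlueEdge j → i ≠ j →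
      c.col i j = nestedCol Prod.fst (g i) (g j) := by
  obtain ⟨coarse, hcoarse⟩ := exists_eq_iff_of_trans_on {i | c.HasBlueEdge i}
    (fun i j ↦ c.col i j ≠ Col.y) (fun i j h ↦ c.symm i j ▸ h) fun _ _ _ hj ↦ hc.col_ne_y_trans hj
  obtain ⟨fine, hfine⟩ := exists_eq_iff_of_trans_on {i | c.HasBlueEdge i}
    (fun i j ↦ c.col i j = Col.r) (fun i j h ↦ c.symm i j ▸ h) fun _ _ _ hj ↦ hc.col_eq_r_trans hj
  refine ⟨fun i ↦ (coarse i, fine i), fun i j hi hj hij ↦ ?_⟩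
  simp only [nestedCol, Prod.mk.injEq, hcoarse i hi j hj hij, hfine i hi j hj hij]
  cases c.col i j <;> simp

theorem Avoids.sq_le_four_mul_h2_pow_three {n : ℕ} {c : Coloring n}
    (hc : Avoids c {Prrb, Pbby, Prby}) : n ^ 2 ≤ 4 * h2 c ^ 3 := by
  classical
  let N : Finset (Fin n) := {u | c.HasBlueEdge u}
  obtain ⟨g, hg⟩ := hc.exists_col_eq_nestedCol
  have hN : #N ^ 2 ≤ h2 c ^ 3 := card_sq_le_h2_pow_three Prod.fst g fun i hi j hj hij ↦
    hg i j (mem_filter.1 hi).2 (mem_filter.1 hj).2 hij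
  have hNcompl : #Nᶜ ≤ h2 c := card_le_h2 ⟨Col.b, fun i hi j _ hij hb ↦
    mem_compl.1 hi (mem_filter.2 ⟨mem_univ i, j, hij, hb⟩)⟩
  have hsq_le : h2 c ^ 2 ≤ h2 c ^ 3 := by
    obtain h | h := (h2 c).eq_zero_or_pos
    · simp [h]
    · exact Nat.pow_le_pow_right h (by norm_num)
  calc n ^ 2 = (#N + #Nᶜ) ^ 2 := by rw [card_add_card_compl, Fintype.card_fin]
    _ ≤ 2 * (#N ^ 2 + #Nᶜ ^ 2) := add_sq_le
    _ ≤ 4 * h2 c ^ 3 := by linarith [(Nat.pow_le_pow_left hNcompl 2).trans hsq_le]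

theorem h2n_le_h2 {n : ℕ} {H : Set (Multiset Col)} {c : Coloring n} (hc : Avoids c H) :
    h2n n H ≤ h2 c :=
  Nat.sInf_le ⟨c, hc, rfl⟩

-- `h2n` is an infimum over `ℕ`, which is the junk value `0` if no coloring avoids `H`.
theorem exists_avoids_h2_eq_h2n {n : ℕ} {H : Set (Multiset Col)}
    (hH : ∃ c : Coloring n, Avoids c H) : ∃ c : Coloring n, Avoids c H ∧ h2 c = h2n n H :=
  let ⟨c, hc⟩ := hH
  Nat.sInf_mem (s := {m | ∃ c : Coloring n, Avoids c H ∧ h2 c = m}) ⟨h2 c, c, hc, rfl⟩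

theorem sq_le_four_mul_h2n_pow_three (n : ℕ) :
    n ^ 2 ≤ 4 * h2n n {Prrb, Pbby, Prby} ^ 3 := by
  obtain ⟨c, hc, hc_eq⟩ := exists_avoids_h2_eq_h2n
    ⟨_, nestedColoring_avoids (n := n) (id : Unit → Unit) fun _ ↦ ()⟩
  exact hc_eq ▸ hc.sq_le_four_mul_h2_pow_three

theorem h2n_le_sq_of_le_pow_three {n k : ℕ} (hnk : n ≤ k ^ 3) :
    h2n n {Prrb, Pbby, Prby} ≤ k ^ 2 :=
  let ⟨_, hc, hle⟩ := exists_avoids_h2_le_sq hnk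
  (h2n_le_h2 hc).trans hle

theorem rpow_two_thirds_eq_sq {x : ℝ} (hx : 0 ≤ x) :
    x ^ ((2 : ℝ) / 3) = (x ^ ((3 : ℝ)⁻¹)) ^ 2 := by
  rw [← Real.rpow_mul_natCast hx]
  norm_num

theorem rpow_inv_three_pow_three {x : ℝ} (hx : 0 ≤ x) : (x ^ ((3 : ℝ)⁻¹)) ^ 3 = x :=
  Real.rpow_inv_natCast_pow hx three_ne_zero

theorem rpow_two_thirds_le_two_mul_h2n (n : ℕ) :
    (n : ℝ) ^ ((2 : ℝ) / 3) ≤ 2 * h2n n {Prrb, Pbby, Prby} := by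
  have hlower : (n : ℝ) ^ 2 ≤ 4 * (h2n n {Prrb, Pbby, Prby} : ℝ) ^ 3 :=
    mod_cast sq_le_four_mul_h2n_pow_three n
  refine le_of_pow_le_pow_left₀ three_ne_zero (by positivity) ?_
  calc ((n : ℝ) ^ ((2 : ℝ) / 3)) ^ 3 = (((n : ℝ) ^ ((3 : ℝ)⁻¹)) ^ 3) ^ 2 := by
        rw [rpow_two_thirds_eq_sq n.cast_nonneg]; ring
    _ = (n : ℝ) ^ 2 := by rw [rpow_inv_three_pow_three n.cast_nonneg]
    _ ≤ 4 * (h2n n {Prrb, Pbby, Prby} : ℝ) ^ 3 := hlower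
    _ ≤ (2 * (h2n n {Prrb, Pbby, Prby} : ℝ)) ^ 3 := by rw [mul_pow]; gcongr; norm_num

theorem h2n_le_four_mul_rpow_two_thirds {n : ℕ} (hn : 1 ≤ n) :
    (h2n n {Prrb, Pbby, Prby} : ℝ) ≤ 4 * (n : ℝ) ^ ((2 : ℝ) / 3) := by
  set z : ℝ := (n : ℝ) ^ ((3 : ℝ)⁻¹) with hz_def
  have hz : 1 ≤ z := Real.one_le_rpow (Nat.one_le_cast.2 hn) (by norm_num)
  have hnz : n ≤ ⌈z⌉₊ ^ 3 := by
    suffices (n : ℝ) ≤ (⌈z⌉₊ : ℝ) ^ 3 by exact_mod_cast this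
    rw [← rpow_inv_three_pow_three n.cast_nonneg]
    gcongr
    exact Nat.le_ceil z
  calc (h2n n {Prrb, Pbby, Prby} : ℝ) ≤ (⌈z⌉₊ : ℝ) ^ 2 :=
        mod_cast h2n_le_sq_of_le_pow_three hnz
    _ ≤ (2 * z) ^ 2 := by gcongr; exact Nat.ceil_le_two_mul (by linarith)
    _ = 4 * (n : ℝ) ^ ((2 : ℝ) / 3) := by
        rw [rpow_two_thirds_eq_sq n.cast_nonneg, ← hz_def]; ring

theorem stmt11 :
    ∃ C1 C2 : ℝ, 0 < C1 ∧ 0 < C2 ∧ ∃ n0 : ℕ, ∀ n : ℕ, n0 ≤ n →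
      C1 * (n : ℝ) ^ ((2 : ℝ) / 3) ≤ (h2n n {Prrb, Pbby, Prby} : ℝ) ∧
      (h2n n {Prrb, Pbby, Prby} : ℝ) ≤ C2 * (n : ℝ) ^ ((2 : ℝ) / 3) := by
  refine ⟨1 / 2, 4, by norm_num, by norm_num, 1, fun n hn ↦ ⟨?_, ?_⟩⟩
  · linarith [rpow_two_thirds_le_two_mul_h2n n]
  · exact h2n_le_four_mul_rpow_two_thirds hn
end

section
/- Let H = {rrr, bbr, yyr} (the patterns: a monochromatic red triangle, a triangle with two blue edges and one red edge, and a triangle with two yellow edges and one red edge). Then for every integer n ≥ 3, h_2(n, H) = ⌈n/2⌉. -/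
/-!
In a coloring without the three patterns, the two edges from a vertex `w` to the ends of a red edge
always have different colors. Hence the red graph is bipartite, so one of its sides is a set of at
least `n / 2` vertices without red edges. Indeed, suppose there is a red closed walk
`v₀ v₁ ⋯ v_{k-1}` of odd length `k`, and take a shortest one. There are no red triangles, so
`5 ≤ k`, and by minimality no two non-consecutive `vᵢ` are equal or joined by a red edge. Along
`v_{i+2}, v_{i+3}, …, v_{i-2}`, an even number of vertices, the color seen from `vᵢ` alternates
between blue and yellow, so `vᵢv_{i+2}` and `vᵢv_{i-2}` have different colors. The color of
`vᵢv_{i+2}` therefore flips whenever `i` advances by `2`; after `k` such steps the walk is back at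
its start with the color flipped an odd number of times, which is absurd.

For the upper bound, the red edges form a perfect matching of the vertices, up to one vertex when
`n` is odd, and the other edges are blue within and yellow between the two sides of the matching.
Each color class then has a cover by `⌈n/2⌉` cliques, each of which meets a set missing that color
at most once.
-/

open SimpleGraph

lemma iff_iff_even_of_xor_succ {P : ℕ → Prop} {m : ℕ} (hP : ∀ i < m, Xor (P i) (P (i + 1))) :
    P m ↔ (P 0 ↔ Even m) := by
  induction m with
  | zero => simp
  | succ m ih =>
    have hlast := xor_iff_not_iff'.1 (hP m m.lt_succ_self)
    have hinit := ih fun i hi ↦ hP i (hi.trans m.lt_succ_self)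
    rw [← hlast, hinit, Nat.even_add_one, not_iff]
    tauto

section SimpleGraph

variable {V : Type*} {G : SimpleGraph V} {k : ℕ}

/-- The set of lengths of odd closed walks of `G`. Its least element, if any, is the odd girth. -/
def oddLoopLengths (G : SimpleGraph V) : Set ℕ :=
  {k | Odd k ∧ ∃ (v : V) (w : G.Walk v v), w.length = k}

lemma oddLoopLengths_nonempty (hG : ¬ G.IsBipartite) : (oddLoopLengths G).Nonempty := by
  simp only [IsBipartite, two_colorable_iff_forall_loop_even, not_forall,
    Nat.not_even_iff_odd] at hG
  obtain ⟨v, w, hw⟩ := hG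
  exact ⟨w.length, hw, v, w, rfl⟩

lemma exists_adj_succ_periodic {v : V} (w : G.Walk v v) (hw : 0 < w.length) :
    ∃ f : ℕ → V, (∀ t, G.Adj (f t) (f (t + 1))) ∧ Function.Periodic f w.length := by
  refine ⟨fun t ↦ w.getVert (t % w.length), fun t ↦ ?_, fun t ↦ by simp⟩
  have hlt := Nat.mod_lt t hw
  have hadj := w.adj_getVert_succ hlt
  rcases (Nat.add_one_le_of_lt hlt).lt_or_eq with hlt' | heq
  · rwa [← Nat.mod_eq_of_lt hlt', Nat.mod_add_mod] at hadj
  · have hzero : (t + 1) % w.length = 0 := by rw [← Nat.mod_add_mod, heq, Nat.mod_self]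
    simpa only [hzero, heq, w.getVert_zero, w.getVert_length] using hadj

lemma exists_walk_length_eq {f : ℕ → V} (hf : ∀ t, G.Adj (f t) (f (t + 1))) (i j : ℕ) :
    ∃ p : G.Walk (f i) (f (i + j)), p.length = j := by
  induction j with
  | zero => exact ⟨.nil, rfl⟩
  | succ j ih =>
    obtain ⟨p, hp⟩ := ih
    exact ⟨p.concat (hf (i + j)), by rw [Walk.length_concat, hp]⟩

lemma compl_adj_of_isLeast_oddLoopLengths (hk : IsLeast (oddLoopLengths G) k) {u v : V}
    (p : G.Walk u v) (q : G.Walk v u) (hp : 2 ≤ p.length) (hq : 2 ≤ q.length)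
    (hpq : p.length + q.length = k) : Gᶜ.Adj u v := by
  have hle {x : V} (w : G.Walk x x) (hw : Odd w.length) : k ≤ w.length := hk.2 ⟨hw, x, w, rfl⟩
  have hodd : Odd (p.length + q.length) := hpq ▸ hk.1.1
  have hparity : Odd p.length ∧ Even q.length ∨ Even p.length ∧ Odd q.length := by
    grind
  rw [compl_adj]
  refine ⟨?_, fun h ↦ ?_⟩
  · rintro rfl
    rcases hparity with ⟨hp', -⟩ | ⟨-, hq'⟩
    · have := hle p hp'
      omega
    · have := hle q hq'
      omega
  · rcases hparity with ⟨-, hq'⟩ | ⟨hp', -⟩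
    · have := hle (.cons h q) hq'.add_one
      rw [Walk.length_cons] at this
      omega
    · have := hle (.cons h.symm p) hp'.add_one
      rw [Walk.length_cons] at this
      omega

lemma compl_adj_add_of_periodic (hk : IsLeast (oddLoopLengths G) k) {f : ℕ → V}
    (hf : ∀ t, G.Adj (f t) (f (t + 1))) (hper : Function.Periodic f k) (i : ℕ) {j : ℕ}
    (hj : 2 ≤ j) (hjk : j + 2 ≤ k) : Gᶜ.Adj (f i) (f (i + j)) := by
  obtain ⟨p, hp⟩ := exists_walk_length_eq hf i j
  obtain ⟨q, hq⟩ := exists_walk_length_eq hf (i + j) (k - j)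
  have hend : f (i + j + (k - j)) = f i := by rw [← hper i]; congr 1; omega
  have hq' : (q.copy rfl hend).length = k - j := by rw [Walk.length_copy, hq]
  exact compl_adj_of_isLeast_oddLoopLengths hk p (q.copy rfl hend) (by omega) (by omega) (by omega)

lemma five_le_of_mem_oddLoopLengths (hG : G.CliqueFree 3) (hk : k ∈ oddLoopLengths G) : 5 ≤ k := by
  obtain ⟨hodd, v, w, rfl⟩ := hk
  have h1 : w.length ≠ 1 := fun h ↦ (Walk.adj_of_length_eq_one h).ne rfl
  have h3 : w.length ≠ 3 := by
    classical
    intro h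
    have h01 : G.Adj (w.getVert 0) (w.getVert 1) := w.adj_getVert_succ (by omega)
    have h12 : G.Adj (w.getVert 1) (w.getVert 2) := w.adj_getVert_succ (by omega)
    have h23 : G.Adj (w.getVert 2) (w.getVert 3) := w.adj_getVert_succ (by omega)
    have hend : w.getVert 3 = w.getVert 0 := by rw [← h, w.getVert_length, w.getVert_zero]
    rw [hend] at h23
    exact hG _ (is3Clique_triple_iff.2 ⟨h01, h23.symm, h12⟩)
  grind

theorem isBipartite_of_cliqueFree_three_of_xor_adj {B : SimpleGraph V} (hG : G.CliqueFree 3)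
    (hB : ∀ ⦃u v w⦄, G.Adj u v → Gᶜ.Adj w u → Gᶜ.Adj w v → Xor (B.Adj w u) (B.Adj w v)) :
    G.IsBipartite := by
  by_contra hbip
  have hk := isLeast_csInf (oddLoopLengths_nonempty hbip)
  set k := sInf (oddLoopLengths G)
  have hk5 : 5 ≤ k := five_le_of_mem_oddLoopLengths hG hk.1
  obtain ⟨hodd, v, w, hw⟩ := hk.1
  obtain ⟨f, hf, hper⟩ := exists_adj_succ_periodic w (by omega)
  rw [hw] at hper
  have hchord (i j : ℕ) (hj : 2 ≤ j) (hjk : j + 2 ≤ k) : Gᶜ.Adj (f i) (f (i + j)) :=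
    compl_adj_add_of_periodic hk hf hper i hj hjk
  have hflip (i : ℕ) : Xor (B.Adj (f i) (f (i + 2))) (B.Adj (f (i + 2)) (f (i + 2 + 2))) := by
    have halt := iff_iff_even_of_xor_succ (m := k - 4)
      (P := fun j ↦ B.Adj (f (i + 2)) (f (i + 2 + (2 + j)))) fun j hj ↦
        hB (hf _) (hchord _ _ (by omega) (by omega)) (hchord _ (2 + (j + 1)) (by omega) (by omega))
    have hend : f (i + 2 + (2 + (k - 4))) = f i := by rw [← hper i]; congr 1; omega
    have hk4 : ¬ Even (k - 4) := by grind
    rw [hend, B.adj_comm] at halt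
    simpa [hk4, xor_iff_iff_not] using halt
  have halt := iff_iff_even_of_xor_succ (m := k) (P := fun j ↦ B.Adj (f (2 * j)) (f (2 * j + 2)))
    fun j _ ↦ hflip (2 * j)
  have hper2 (t : ℕ) : f (2 * k + t) = f t := by rw [add_comm]; exact hper.nat_mul 2 t
  have hreturn : f (2 * k) = f 0 := hper2 0
  simp only [hper2, hreturn, mul_zero, zero_add] at halt
  exact Nat.not_even_iff_odd.2 hodd (by tauto)

lemma card_le_mul_indepNum_of_colorable [Fintype V] (hG : G.Colorable k) :
    Fintype.card V ≤ G.indepNum * k := by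
  classical
  obtain ⟨C⟩ := hG
  have hfiber (a : Fin k) : (Finset.univ.filter (C · = a)).card ≤ G.indepNum :=
    IsIndepSet.card_le_indepNum (by rw [Finset.coe_filter_univ]; exact C.isIndepSet_colorClass a)
  simpa using Finset.card_le_mul_card_image_of_maps_to (s := Finset.univ) (t := Finset.univ)
    (fun v _ ↦ Finset.mem_univ (C v)) _ fun a _ ↦ hfiber a

lemma indepNum_le_of_colorable_compl [Finite V] (hG : Gᶜ.Colorable k) : G.indepNum ≤ k := by
  obtain ⟨s, hs⟩ := G.exists_isNIndepSet_indepNum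
  rw [← hs.card_eq]
  exact ((isClique_compl G).2 hs.isIndepSet).card_le_of_colorable hG

end SimpleGraph

namespace Coloring

variable {n m : ℕ} {c : Coloring n} {u v : Fin n}

/-- The graph formed by the edges of color `x`. -/
def graph (c : Coloring n) (x : Col) : SimpleGraph (Fin n) where
  Adj u v := u ≠ v ∧ c.col u v = x
  symm := ⟨fun u v h ↦ ⟨h.1.symm, c.symm v u ▸ h.2⟩⟩
  loopless := ⟨fun _ h ↦ h.1 rfl⟩

lemma graph_adj {x : Col} : (c.graph x).Adj u v ↔ u ≠ v ∧ c.col u v = x := Iff.rfl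

lemma compl_graph_adj {x : Col} : (c.graph x)ᶜ.Adj u v ↔ u ≠ v ∧ c.col u v ≠ x := by
  rw [compl_adj, graph_adj]
  tauto

lemma twoColored_iff {S : Finset (Fin n)} :
    TwoColored c S ↔ ∃ x, (c.graph x).IsIndepSet (S : Set (Fin n)) := by
  refine exists_congr fun x ↦ ?_
  simp only [isIndepSet_iff, Set.Pairwise, graph_adj, Finset.mem_coe]
  grind

lemma h2_le_iff : h2 c ≤ m ↔ ∀ x, (c.graph x).indepNum ≤ m := by
  have hbdd : BddAbove {k | ∃ S : Finset (Fin n), TwoColored c S ∧ S.card = k} :=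
    ⟨n, by rintro _ ⟨S, -, rfl⟩; simpa using S.card_le_univ⟩
  have hne : {k | ∃ S : Finset (Fin n), TwoColored c S ∧ S.card = k}.Nonempty :=
    ⟨0, ∅, ⟨Col.r, by simp⟩, rfl⟩
  rw [h2, csSup_le_iff hbdd hne]
  constructor
  · intro h x
    obtain ⟨S, hS⟩ := (c.graph x).exists_isNIndepSet_indepNum
    exact h _ ⟨S, twoColored_iff.2 ⟨x, hS.isIndepSet⟩, hS.card_eq⟩
  · rintro h _ ⟨S, hS, rfl⟩
    obtain ⟨x, hx⟩ := twoColored_iff.1 hS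
    exact hx.card_le_indepNum.trans (h x)

lemma contains_self_self_r_iff {x : Col} :
    Contains c {x, x, Col.r} ↔
      ∃ u v w, (c.graph Col.r).Adj u v ∧ (c.graph x).Adj w u ∧ (c.graph x).Adj w v := by
  have hcases : ∀ p q s : Col, ({p, q, s} : Multiset Col) = {x, x, Col.r} →
      (p = Col.r ∧ q = x ∧ s = x) ∨ (q = Col.r ∧ p = x ∧ s = x) ∨ (s = Col.r ∧ p = x ∧ q = x) := by
    intro p q s
    cases p <;> cases q <;> cases s <;> cases x <;> decide
  simp only [graph_adj]
  constructor
  · rintro ⟨u, v, w, huv, hvw, huw, hP⟩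
    rcases hcases _ _ _ hP with ⟨hr, h₁, h₂⟩ | ⟨hr, h₁, h₂⟩ | ⟨hr, h₁, h₂⟩
    · exact ⟨u, v, w, ⟨huv, hr⟩, ⟨huw.symm, c.symm w u ▸ h₂⟩, ⟨hvw.symm, c.symm w v ▸ h₁⟩⟩
    · exact ⟨v, w, u, ⟨hvw, hr⟩, ⟨huv, h₁⟩, ⟨huw, h₂⟩⟩
    · exact ⟨u, w, v, ⟨huw, hr⟩, ⟨huv.symm, c.symm v u ▸ h₁⟩, ⟨hvw, h₂⟩⟩
  · rintro ⟨u, v, w, ⟨huv, hr⟩, ⟨hwu, h₁⟩, ⟨hwv, h₂⟩⟩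
    exact ⟨u, w, v, hwu.symm, hwv, huv, by rw [triPattern, c.symm u w, h₁, h₂, hr]⟩

lemma avoids_rrr_bbr_yyr_iff :
    Avoids c {Prrr, Pbbr, Pyyr} ↔
      ∀ x u v w, (c.graph Col.r).Adj u v → (c.graph x).Adj w u → ¬ (c.graph x).Adj w v := by
  have hcol : Avoids c {Prrr, Pbbr, Pyyr} ↔ ∀ x, ¬ Contains c {x, x, Col.r} := by
    refine ⟨fun h x ↦ ?_, ?_⟩
    · cases x
      exacts [h Prrr (by simp), h Pbbr (by simp), h Pyyr (by simp)]
    · rintro h P (rfl | rfl | rfl)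
      exacts [h Col.r, h Col.b, h Col.y]
  simp only [hcol, contains_self_self_r_iff, not_exists, not_and]

theorem isBipartite_graph_r (hc : Avoids c {Prrr, Pbbr, Pyyr}) :
    (c.graph Col.r).IsBipartite := by
  rw [avoids_rrr_bbr_yyr_iff] at hc
  refine isBipartite_of_cliqueFree_three_of_xor_adj (B := c.graph Col.b) ?_ ?_
  · intro s hs
    obtain ⟨u, v, w, huv, huw, hvw, -⟩ := is3Clique_iff.1 hs
    exact hc _ _ _ _ huv huw.symm hvw.symm
  · intro u v w huv hwu hwv
    rw [compl_graph_adj] at hwu hwv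
    have hb := hc Col.b u v w huv
    have hy := hc Col.y u v w huv
    simp only [graph_adj, hwu.1, hwv.1, ne_eq, not_false_eq_true, true_and] at hb hy ⊢
    cases hu : c.col w u <;> cases hv : c.col w v <;> simp_all [xor_def]

theorem add_one_div_two_le_h2 (hc : Avoids c {Prrr, Pbbr, Pyyr}) : (n + 1) / 2 ≤ h2 c := by
  have hindep : (c.graph Col.r).indepNum ≤ h2 c := h2_le_iff.1 le_rfl Col.r
  have hcard := card_le_mul_indepNum_of_colorable (isBipartite_graph_r hc)
  rw [Fintype.card_fin] at hcard
  omega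

end Coloring

/-- The extremal coloring: the pairs `{2i, 2i + 1}` are red, all other edges are blue or yellow
according to whether the parities of their ends agree or differ. -/
def pairColoring (n : ℕ) : Coloring n where
  col i j := if i.1 / 2 = j.1 / 2 then Col.r else if i.1 % 2 = j.1 % 2 then Col.b else Col.y
  symm i j := by simp only [eq_comm]

namespace pairColoring

variable {n : ℕ} {i j : Fin n}

lemma graph_r_adj : ((pairColoring n).graph Col.r).Adj i j ↔ i.1 ≠ j.1 ∧ i.1 / 2 = j.1 / 2 := by
  grind [Coloring.graph_adj, pairColoring]

lemma graph_b_adj : ((pairColoring n).graph Col.b).Adj i j ↔ i.1 ≠ j.1 ∧ i.1 % 2 = j.1 % 2 := by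
  grind [Coloring.graph_adj, pairColoring]

lemma graph_y_adj :
    ((pairColoring n).graph Col.y).Adj i j ↔ i.1 / 2 ≠ j.1 / 2 ∧ i.1 % 2 ≠ j.1 % 2 := by
  grind [Coloring.graph_adj, pairColoring]

lemma avoids : Avoids (pairColoring n) {Prrr, Pbbr, Pyyr} := by
  rw [Coloring.avoids_rrr_bbr_yyr_iff]
  rintro (_ | _ | _) u v w <;> simp only [graph_r_adj, graph_b_adj, graph_y_adj] <;> omega

lemma colorable_compl_graph (hn : 3 ≤ n) (x : Col) :
    ((pairColoring n).graph x)ᶜ.Colorable ((n + 1) / 2) := by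
  suffices ∃ f : ℕ → ℕ, (∀ i < n, f i < (n + 1) / 2) ∧
      ∀ i j : Fin n, i.1 ≠ j.1 → f i = f j → ((pairColoring n).graph x).Adj i j by
    obtain ⟨f, hlt, hadj⟩ := this
    refine (colorable_iff_exists_bdd_nat_coloring _).2
      ⟨.mk (fun i ↦ f i) fun {i j} hij heq ↦ ?_, fun i ↦ hlt i i.2⟩
    rw [compl_adj] at hij
    exact hij.2 (hadj i j (Fin.val_ne_of_ne hij.1) heq)
  cases x
  · exact ⟨(· / 2), fun i hi ↦ by lia, fun i j hne heq ↦ graph_r_adj.2 ⟨hne, heq⟩⟩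
  · exact ⟨(· % 2), fun i _ ↦ by lia, fun i j hne heq ↦ graph_b_adj.2 ⟨hne, heq⟩⟩
  · -- The yellow cliques are `{2i, 2i + 3}`, while `1` joins the last even number.
    refine ⟨fun i ↦ if i % 2 = 0 then i / 2 else if i = 1 then (n + 1) / 2 - 1 else i / 2 - 1,
      fun i hi ↦ ?_, fun i j hne heq ↦ graph_y_adj.2 ?_⟩ <;> grind

lemma h2_le (hn : 3 ≤ n) : h2 (pairColoring n) ≤ (n + 1) / 2 :=
  Coloring.h2_le_iff.2 fun x ↦ indepNum_le_of_colorable_compl (colorable_compl_graph hn x)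

end pairColoring

theorem stmt15 (n : ℕ) (hn : 3 ≤ n) :
    h2n n {Prrr, Pbbr, Pyyr} = (n + 1) / 2 := by
  apply le_antisymm
  · have hmin : h2n n {Prrr, Pbbr, Pyyr} ≤ h2 (pairColoring n) :=
      Nat.sInf_le ⟨pairColoring n, pairColoring.avoids, rfl⟩
    exact hmin.trans (pairColoring.h2_le hn)
  · refine le_csInf ⟨_, pairColoring n, pairColoring.avoids, rfl⟩ ?_
    rintro _ ⟨c, hc, rfl⟩
    exact Coloring.add_one_div_two_le_h2 hc
end

section
/- Let H = {rrr, bby, yyb} (the patterns: a monochromatic red triangle, a triangle with two blue edges and one yellow edge, and a triangle with two yellow edges and one blue edge). Then for every integer n ≥ 3, h_2(n, H) = ⌈n/2⌉. -/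
open SimpleGraph

section GraphPairs

variable {V : Type*} {X Y : SimpleGraph V} {S T : Set V} {u v w z p q : V}

/-- The blue and yellow color classes `X`, `Y` of a coloring of the complete graph on `V` that
avoids `rrr`, `bby` and `yyb`. The red class is not a separate parameter but `(X ⊔ Y)ᶜ`, which
makes the notion symmetric in `X` and `Y`. -/
structure Admissible (X Y : SimpleGraph V) : Prop where
  cliqueFree_red : (X ⊔ Y)ᶜ.CliqueFree 3
  red_of_adj : ∀ ⦃u v w⦄, X.Adj u v → Y.Adj v w → (X ⊔ Y)ᶜ.Adj u w

/-- The vertex set `S` is two-colored with respect to blue class `X`, yellow class `Y` and red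
class `(X ⊔ Y)ᶜ`; missing red is phrased as being a clique of `X ⊔ Y`. -/
def MissesColor (X Y : SimpleGraph V) (S : Set V) : Prop :=
  (X ⊔ Y).IsClique S ∨ X.IsIndepSet S ∨ Y.IsIndepSet S

/-- The set `Z` of those red neighbors of `v` that send a `Y`-edge to the `X`-neighborhood of `v`;
it is split off to make the other red neighbors `Y`-independent of the `X`-neighborhood. -/
def mixedRedNeighborSet (X Y : SimpleGraph V) (v : V) : Set V :=
  {z | (X ⊔ Y)ᶜ.Adj v z ∧ ∃ w, X.Adj v w ∧ Y.Adj z w}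

theorem MissesColor.symm (h : MissesColor X Y S) : MissesColor Y X S := by
  rwa [MissesColor, sup_comm, or_comm (a := Y.IsIndepSet S)]

theorem red_or_adj_or_adj (huv : u ≠ v) : (X ⊔ Y)ᶜ.Adj u v ∨ X.Adj u v ∨ Y.Adj u v := by
  rw [compl_adj, sup_adj]
  tauto

theorem not_adj_left_of_red (hR : (X ⊔ Y)ᶜ.Adj u v) : ¬X.Adj u v :=
  fun hX => ((compl_adj _ _ _).1 hR).2 (Or.inl hX)

theorem not_adj_right_of_red (hR : (X ⊔ Y)ᶜ.Adj u v) : ¬Y.Adj u v :=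
  fun hY => ((compl_adj _ _ _).1 hR).2 (Or.inr hY)

theorem card_le_ncard_insert_add_of_subsingleton [Finite V] (hX : (X.neighborSet v).Subsingleton) :
    Nat.card V ≤ (insert v (Y.neighborSet v)).ncard
      + (insert v ((X ⊔ Y)ᶜ.neighborSet v)).ncard := by
  have hsub : (insert v (Y.neighborSet v))ᶜ ⊆ X.neighborSet v ∪ (X ⊔ Y)ᶜ.neighborSet v := by
    intro u hu
    rw [Set.mem_compl_iff, Set.mem_insert_iff, not_or] at hu
    rcases red_or_adj_or_adj (X := X) (Y := Y) (Ne.symm hu.1) with hR | hX | hY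
    · exact Or.inr hR
    · exact Or.inl hX
    · exact absurd hY hu.2
  have hcompl := (Set.ncard_le_ncard hsub).trans (Set.ncard_union_le _ _)
  have hone : (X.neighborSet v).ncard ≤ 1 := Set.ncard_le_one_iff_subsingleton.2 hX
  have hinsert : (insert v ((X ⊔ Y)ᶜ.neighborSet v)).ncard
      = ((X ⊔ Y)ᶜ.neighborSet v).ncard + 1 :=
    Set.ncard_insert_of_notMem ((X ⊔ Y)ᶜ.notMem_neighborSet_self)
  have hcard := Set.ncard_add_ncard_compl (insert v (Y.neighborSet v))
  omega

theorem exists_le_two_mul_ncard {P : Set V → Prop} {m : ℕ} (hS : P S) (hT : P T)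
    (hm : m ≤ S.ncard + T.ncard) : ∃ U, P U ∧ m ≤ 2 * U.ncard := by
  rcases le_total S.ncard T.ncard with hle | hle
  · exact ⟨T, hT, by omega⟩
  · exact ⟨S, hS, by omega⟩

namespace Admissible

theorem symm (h : Admissible X Y) : Admissible Y X where
  cliqueFree_red := sup_comm X Y ▸ h.cliqueFree_red
  red_of_adj _ _ _ hY hX := sup_comm X Y ▸ (h.red_of_adj hX.symm hY.symm).symm

theorem not_adj_right_of_adj_left (h : Admissible X Y) (hX : X.Adj u v) : ¬Y.Adj u v :=
  fun hY => (h.red_of_adj hX hY.symm).ne rfl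

theorem isIndepSet_of_isClique (h : Admissible X Y) (hS : X.IsClique S) : Y.IsIndepSet S :=
  hS.mono' fun _ _ => h.not_adj_right_of_adj_left

theorem not_adj_of_isClique (h : Admissible X Y) (hS : (X ⊔ Y).IsClique S) (hu : u ∈ S)
    (hw : w ∈ S) (hX : X.Adj u v) : ¬Y.Adj v w := fun hY =>
  have hred := h.red_of_adj hX hY
  ((compl_adj _ _ _).1 hred).2 (hS hu hw hred.ne)

theorem isClique_or_isClique (h : Admissible X Y) (hS : (X ⊔ Y).IsClique S) :
    X.IsClique S ∨ Y.IsClique S := by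
  by_contra! ⟨hX, hY⟩
  obtain ⟨s, hs, t, ht, hst, hXst⟩ : ∃ s ∈ S, ∃ t ∈ S, s ≠ t ∧ ¬X.Adj s t := by
    simpa [Set.Pairwise] using hX
  obtain ⟨i, hi, j, hj, hij, hYij⟩ : ∃ i ∈ S, ∃ j ∈ S, i ≠ j ∧ ¬Y.Adj i j := by
    simpa [Set.Pairwise] using hY
  have hYst : Y.Adj s t := (hS hs ht hst).resolve_left hXst
  have hXij : X.Adj i j := (hS hi hj hij).resolve_right hYij
  have hjs : j ≠ s := by
    rintro rfl
    exact h.not_adj_of_isClique hS hi ht hXij hYst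
  rcases hS hj hs hjs with hX | hY
  · exact h.not_adj_of_isClique hS hj ht hX hYst
  · exact h.not_adj_of_isClique hS hi hs hXij hY

theorem isClique_red_neighborSet (h : Admissible X Y) (v : V) :
    (X ⊔ Y).IsClique ((X ⊔ Y)ᶜ.neighborSet v) :=
  (isIndepSet_compl _).1 (isIndepSet_neighborSet_of_triangleFree _ h.cliqueFree_red v)

theorem isClique_neighborSet (h : Admissible X Y) (hq : Y.Adj v q) :
    X.IsClique (X.neighborSet v) := by
  intro s hs t ht hst
  have hqs : (X ⊔ Y)ᶜ.Adj q s := (h.red_of_adj (X.adj_symm hs) hq).symm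
  have hqt : (X ⊔ Y)ᶜ.Adj q t := (h.red_of_adj (X.adj_symm ht) hq).symm
  refine (h.isClique_red_neighborSet q hqs hqt hst).resolve_right fun hY => ?_
  exact not_adj_left_of_red (h.red_of_adj hs hY) ht

theorem adj_of_mem_mixedRedNeighborSet (h : Admissible X Y) (hX : (X.neighborSet v).Nontrivial)
    (hu : Y.Adj v u) (hz : z ∈ mixedRedNeighborSet X Y v) : (X ⊔ Y).Adj u z := by
  obtain ⟨hvz, w, hvw, hzw⟩ := hz
  obtain ⟨x, hvx, hne⟩ := hX.exists_ne w
  have hxw : X.Adj x w := h.isClique_neighborSet hu hvx hvw hne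
  have hxz : (X ⊔ Y)ᶜ.Adj x z := h.red_of_adj hxw hzw.symm
  have hxu : (X ⊔ Y)ᶜ.Adj x u := h.red_of_adj (X.adj_symm hvx) hu
  have huz : u ≠ z := by
    rintro rfl
    exact not_adj_right_of_red hvz hu
  exact h.isClique_red_neighborSet x hxu hxz huz

theorem isClique_neighborSet_union_mixedRedNeighborSet (h : Admissible X Y)
    (hX : (X.neighborSet v).Nontrivial) :
    (X ⊔ Y).IsClique (Y.neighborSet v ∪ mixedRedNeighborSet X Y v) := by
  obtain ⟨p, hp⟩ := hX.nonempty
  have := (X ⊔ Y).symm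
  refine Set.pairwise_union_of_symm.2 ⟨?_, ?_, ?_⟩
  · exact (h.symm.isClique_neighborSet hp).mono le_sup_right
  · exact (h.isClique_red_neighborSet v).subset fun _ hz => hz.1
  · exact fun u hu z hz _ => h.adj_of_mem_mixedRedNeighborSet hX hu hz

theorem isIndepSet_compl_union_mixedRedNeighborSet (h : Admissible X Y) (hq : Y.Adj v q)
    (hR : X.IsClique ((X ⊔ Y)ᶜ.neighborSet v)) :
    Y.IsIndepSet (Y.neighborSet v ∪ mixedRedNeighborSet X Y v)ᶜ := by
  intro i hi j hj hij hY
  rw [Set.mem_compl_iff, Set.mem_union, not_or] at hi hj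
  have hvi : v ≠ i := by
    rintro rfl
    exact hj.1 hY
  have hvj : v ≠ j := by
    rintro rfl
    exact hi.1 hY.symm
  rcases red_or_adj_or_adj hvi with hRi | hXi | hYi
  · rcases red_or_adj_or_adj hvj with hRj | hXj | hYj
    · exact h.not_adj_right_of_adj_left (hR hRi hRj hij) hY
    · exact hi.2 ⟨hRi, j, hXj, hY⟩
    · exact hj.1 hYj
  · rcases red_or_adj_or_adj hvj with hRj | hXj | hYj
    · exact hj.2 ⟨hRj, i, hXi, hY.symm⟩
    · exact h.not_adj_right_of_adj_left (h.isClique_neighborSet hq hXi hXj hij) hY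
    · exact hj.1 hYj
  · exact hi.1 hYi

theorem missesColor_insert_neighborSet (h : Admissible X Y) (hp : X.Adj v p) :
    MissesColor X Y (insert v (Y.neighborSet v)) :=
  Or.inl <| ((h.symm.isClique_neighborSet hp).insert fun _ hu _ => hu).mono le_sup_right

theorem missesColor_insert_red_neighborSet (h : Admissible X Y)
    (hR : X.IsClique ((X ⊔ Y)ᶜ.neighborSet v)) :
    MissesColor X Y (insert v ((X ⊔ Y)ᶜ.neighborSet v)) := by
  rw [MissesColor, ← isClique_compl Y]
  refine Or.inr <| Or.inr <| ((isClique_compl Y).2 (h.isIndepSet_of_isClique hR)).insert ?_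
  exact fun u hu hne => (compl_adj _ _ _).2 ⟨hne, not_adj_right_of_red hu⟩

theorem exists_missesColor_of_isClique_red [Finite V] (h : Admissible X Y) (hp : X.Adj v p)
    (hq : Y.Adj v q) (hR : X.IsClique ((X ⊔ Y)ᶜ.neighborSet v)) :
    ∃ S, MissesColor X Y S ∧ Nat.card V ≤ 2 * S.ncard := by
  by_cases hX : (X.neighborSet v).Nontrivial
  · exact exists_le_two_mul_ncard
      (Or.inl (h.isClique_neighborSet_union_mixedRedNeighborSet hX))
      (Or.inr (Or.inr (h.isIndepSet_compl_union_mixedRedNeighborSet hq hR)))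
      (Set.ncard_add_ncard_compl _).ge
  · exact exists_le_two_mul_ncard (h.missesColor_insert_neighborSet hp)
      (h.missesColor_insert_red_neighborSet hR)
      (card_le_ncard_insert_add_of_subsingleton (Set.not_nontrivial_iff.1 hX))

theorem exists_missesColor [Finite V] (h : Admissible X Y) :
    ∃ S, MissesColor X Y S ∧ Nat.card V ≤ 2 * S.ncard := by
  by_cases hmixed : ∃ v p q, X.Adj v p ∧ Y.Adj v q
  · obtain ⟨v, p, q, hp, hq⟩ := hmixed
    rcases h.isClique_or_isClique (h.isClique_red_neighborSet v) with hR | hR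
    · exact h.exists_missesColor_of_isClique_red hp hq hR
    · rw [sup_comm] at hR
      obtain ⟨S, hS, hcard⟩ := h.symm.exists_missesColor_of_isClique_red hq hp hR
      exact ⟨S, hS.symm, hcard⟩
  · push Not at hmixed
    have hsupp : Y.IsIndepSet X.support := fun u ⟨p, hp⟩ w _ _ => hmixed u p w hp
    have hcompl : X.IsIndepSet X.supportᶜ := fun u hu w _ _ hX => hu ⟨w, hX⟩
    exact exists_le_two_mul_ncard (Or.inr (Or.inr hsupp)) (Or.inr (Or.inl hcompl))
      (Set.ncard_add_ncard_compl _).ge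

end Admissible

end GraphPairs

theorem multiset_triple_eq_iff {α : Type*} {a b c x y z : α} :
    ({a, b, c} : Multiset α) = {x, y, z} ↔
      (a = x ∧ b = y ∧ c = z) ∨ (a = y ∧ b = x ∧ c = z) ∨ (a = y ∧ b = z ∧ c = x) ∨
      (a = x ∧ b = z ∧ c = y) ∨ (a = z ∧ b = x ∧ c = y) ∨ (a = z ∧ b = y ∧ c = x) := by
  have hperm : ({a, b, c} : Multiset α) = {x, y, z} ↔ [a, b, c].Perm [x, y, z] :=
    Multiset.coe_eq_coe
  rw [hperm, ← List.mem_permutations']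
  simp [List.permutations', List.permutations'Aux]

namespace Coloring

variable {n : ℕ} {c : Coloring n}

/-- The graph formed by the edges of color `k`; the junk values of `c.col` on the diagonal are
discarded. -/
def colorClass (c : Coloring n) (k : Col) : SimpleGraph (Fin n) where
  Adj i j := i ≠ j ∧ c.col i j = k
  symm := ⟨fun i j h => ⟨h.1.symm, c.symm i j ▸ h.2⟩⟩
  loopless := ⟨fun _ h => h.1 rfl⟩

theorem colorClass_adj {k : Col} {i j : Fin n} :
    (c.colorClass k).Adj i j ↔ i ≠ j ∧ c.col i j = k :=
  Iff.rfl

theorem compl_sup_colorClass (c : Coloring n) :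
    (c.colorClass .b ⊔ c.colorClass .y)ᶜ = c.colorClass .r := by
  ext i j
  cases hij : c.col i j <;> simp [colorClass_adj, hij]

theorem eq_of_colorClass_adj {k l : Col} {i j : Fin n} (hk : (c.colorClass k).Adj i j)
    (hl : (c.colorClass l).Adj i j) : k = l :=
  hk.2.symm.trans hl.2

theorem contains_iff {k l m : Col} :
    Contains c {k, l, m} ↔ ∃ u v w, (c.colorClass k).Adj u v ∧ (c.colorClass l).Adj v w ∧
      (c.colorClass m).Adj u w := by
  constructor
  · rintro ⟨u, v, w, huv, hvw, huw, h⟩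
    have edge {i j : Fin n} {k : Col} (hij : i ≠ j) (hk : c.col i j = k) :
        (c.colorClass k).Adj i j := ⟨hij, hk⟩
    rcases multiset_triple_eq_iff.1 h with ⟨h₁, h₂, h₃⟩ | ⟨h₁, h₂, h₃⟩ | ⟨h₁, h₂, h₃⟩ |
      ⟨h₁, h₂, h₃⟩ | ⟨h₁, h₂, h₃⟩ | ⟨h₁, h₂, h₃⟩ <;>
    replace h₁ := edge huv h₁ <;> replace h₂ := edge hvw h₂ <;> replace h₃ := edge huw h₃
    · exact ⟨u, v, w, h₁, h₂, h₃⟩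
    · exact ⟨w, v, u, h₂.symm, h₁.symm, h₃.symm⟩
    · exact ⟨w, u, v, h₃.symm, h₁, h₂.symm⟩
    · exact ⟨v, u, w, h₁.symm, h₃, h₂⟩
    · exact ⟨v, w, u, h₂, h₃.symm, h₁.symm⟩
    · exact ⟨u, w, v, h₃, h₂.symm, h₁⟩
  · rintro ⟨u, v, w, huv, hvw, huw⟩
    refine ⟨u, v, w, huv.1, hvw.1, huw.1, ?_⟩
    rw [triPattern, huv.2, hvw.2, huw.2]

theorem avoids_iff_admissible :
    Avoids c {Prrr, Pbby, Pyyb} ↔ Admissible (c.colorClass .b) (c.colorClass .y) := by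
  simp only [Avoids, Set.mem_insert_iff, Set.mem_singleton_iff, forall_eq_or_imp, forall_eq,
    Prrr, Pbby, Pyyb, contains_iff]
  constructor
  · rintro ⟨hrrr, hbby, hyyb⟩
    refine ⟨?_, fun u v w hb hy => ?_⟩
    · classical
      intro s hs
      rw [compl_sup_colorClass] at hs
      obtain ⟨u, v, w, huv, huw, hvw, -⟩ := is3Clique_iff.1 hs
      exact hrrr ⟨u, v, w, huv, hvw, huw⟩
    · have huw : u ≠ w := by
        rintro rfl
        exact absurd (eq_of_colorClass_adj hb hy.symm) Col.noConfusion
      rcases red_or_adj_or_adj huw with hr | hb' | hy'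
      · exact hr
      · exact absurd ⟨v, u, w, hb.symm, hb', hy⟩ hbby
      · exact absurd ⟨v, w, u, hy, hy'.symm, hb.symm⟩ hyyb
  · intro h
    refine ⟨?_, ?_, ?_⟩
    · rintro ⟨u, v, w, huv, hvw, huw⟩
      rw [← compl_sup_colorClass] at huv hvw huw
      exact isIndepSet_neighborSet_of_triangleFree _ h.cliqueFree_red v huv.symm hvw huw.ne huw
    · rintro ⟨u, v, w, hbuv, hbvw, hyuw⟩
      have hr := h.red_of_adj hbuv.symm hyuw
      exact not_adj_left_of_red hr hbvw
    · rintro ⟨u, v, w, hyuv, hyvw, hbuw⟩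
      have hr := h.red_of_adj hbuw.symm hyuv
      exact not_adj_right_of_red hr hyvw.symm

theorem twoColored_iff_missesColor {S : Finset (Fin n)} :
    TwoColored c S ↔ MissesColor (c.colorClass .b) (c.colorClass .y) S := by
  have hindep (k : Col) : (c.colorClass k).IsIndepSet S ↔
      ∀ i ∈ S, ∀ j ∈ S, i ≠ j → c.col i j ≠ k := by
    simp +contextual [Set.Pairwise, colorClass_adj]
  rw [MissesColor, ← isIndepSet_compl, compl_sup_colorClass, hindep, hindep, hindep]
  constructor
  · rintro ⟨_ | _ | _, h⟩
    exacts [Or.inl h, Or.inr (Or.inl h), Or.inr (Or.inr h)]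
  · rintro (h | h | h)
    exacts [⟨_, h⟩, ⟨_, h⟩, ⟨_, h⟩]

theorem le_h2 {S : Finset (Fin n)} (hS : TwoColored c S) : S.card ≤ h2 c :=
  le_csSup ⟨n, by rintro _ ⟨T, -, rfl⟩; exact card_finset_fin_le T⟩ ⟨S, hS, rfl⟩

theorem h2_le {m : ℕ} (h : ∀ S, TwoColored c S → S.card ≤ m) : h2 c ≤ m :=
  csSup_le ⟨0, ∅, ⟨.r, by simp⟩, rfl⟩ <| by
    rintro _ ⟨S, hS, rfl⟩
    exact h S hS

theorem le_h2_of_avoids (hc : Avoids c {Prrr, Pbby, Pyyb}) : (n + 1) / 2 ≤ h2 c := by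
  obtain ⟨S, hS, hcard⟩ := (avoids_iff_admissible.1 hc).exists_missesColor
  rw [← S.toFinite.coe_toFinset] at hS hcard
  have hle := le_h2 (twoColored_iff_missesColor.2 hS)
  rw [Nat.card_fin, Set.ncard_coe_finset] at hcard
  omega

/-- The extremal coloring: the even and the odd vertices form blue cliques, joined by the yellow
matching `{0, 1}, {2, 3}, …`; all other edges are red. -/
def matchedCliques (n : ℕ) : Coloring n where
  col i j := if i.val % 2 = j.val % 2 then .b else if i.val / 2 = j.val / 2 then .y else .r
  symm i j := by simp only [eq_comm]

theorem matchedCliques_blue_adj {i j : Fin n} :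
    ((matchedCliques n).colorClass .b).Adj i j ↔ i ≠ j ∧ i.val % 2 = j.val % 2 := by
  simp only [colorClass_adj, matchedCliques]
  grind

theorem matchedCliques_yellow_adj {i j : Fin n} :
    ((matchedCliques n).colorClass .y).Adj i j ↔ i ≠ j ∧ i.val / 2 = j.val / 2 := by
  simp only [colorClass_adj, matchedCliques]
  grind

theorem matchedCliques_red_adj {i j : Fin n} :
    ((matchedCliques n).colorClass .r).Adj i j ↔
      i.val % 2 ≠ j.val % 2 ∧ i.val / 2 ≠ j.val / 2 := by
  simp only [colorClass_adj, matchedCliques]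
  grind

theorem admissible_matchedCliques (n : ℕ) :
    Admissible ((matchedCliques n).colorClass .b) ((matchedCliques n).colorClass .y) := by
  constructor
  · classical
    intro s hs
    rw [compl_sup_colorClass] at hs
    obtain ⟨u, v, w, huv, huw, hvw, -⟩ := is3Clique_iff.1 hs
    rw [matchedCliques_red_adj] at huv huw hvw
    omega
  · intro u v w hb hy
    rw [matchedCliques_blue_adj] at hb
    rw [matchedCliques_yellow_adj] at hy
    rw [compl_sup_colorClass, matchedCliques_red_adj]
    omega

theorem matchedCliques_card_le_of_isIndepSet_yellow {S : Finset (Fin n)}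
    (hS : ((matchedCliques n).colorClass .y).IsIndepSet S) : S.card ≤ (n + 1) / 2 := by
  rw [← Finset.card_range ((n + 1) / 2)]
  refine Finset.card_le_card_of_injOn (fun i => i.val / 2) (fun i _ => ?_) fun i hi j hj hij => ?_
  · simp only [Finset.coe_range, Set.mem_Iio]
    omega
  · by_contra hne
    exact hS hi hj hne (matchedCliques_yellow_adj.2 ⟨hne, hij⟩)

theorem matchedCliques_card_le_of_isIndepSet_blue {S : Finset (Fin n)}
    (hS : ((matchedCliques n).colorClass .b).IsIndepSet S) : S.card ≤ 2 := by
  rw [← Finset.card_range 2]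
  refine Finset.card_le_card_of_injOn (fun i => i.val % 2) (fun i _ => ?_) fun i hi j hj hij => ?_
  · simp only [Finset.coe_range, Set.mem_Iio]
    omega
  · by_contra hne
    exact hS hi hj hne (matchedCliques_blue_adj.2 ⟨hne, hij⟩)

theorem h2_matchedCliques_le (n : ℕ) : h2 (matchedCliques n) ≤ max 2 ((n + 1) / 2) := by
  have hadm := admissible_matchedCliques n
  refine h2_le fun S hS => le_max_iff.2 ?_
  rcases twoColored_iff_missesColor.1 hS with hr | hb | hy
  · rcases hadm.isClique_or_isClique hr with hb | hy
    · exact Or.inr (matchedCliques_card_le_of_isIndepSet_yellow (hadm.isIndepSet_of_isClique hb))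
    · exact Or.inl (matchedCliques_card_le_of_isIndepSet_blue (hadm.symm.isIndepSet_of_isClique hy))
  · exact Or.inl (matchedCliques_card_le_of_isIndepSet_blue hb)
  · exact Or.inr (matchedCliques_card_le_of_isIndepSet_yellow hy)

end Coloring

theorem stmt17 (n : ℕ) (hn : 3 ≤ n) :
    h2n n {Prrr, Pbby, Pyyb} = (n + 1) / 2 := by
  have havoids : Avoids (Coloring.matchedCliques n) {Prrr, Pbby, Pyyb} :=
    Coloring.avoids_iff_admissible.2 (Coloring.admissible_matchedCliques n)
  apply le_antisymm
  · calc h2n n {Prrr, Pbby, Pyyb}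
        ≤ h2 (Coloring.matchedCliques n) := Nat.sInf_le ⟨_, havoids, rfl⟩
      _ ≤ max 2 ((n + 1) / 2) := Coloring.h2_matchedCliques_le n
      _ = (n + 1) / 2 := max_eq_right (by omega)
  · refine le_csInf ⟨_, _, havoids, rfl⟩ ?_
    rintro _ ⟨c, hc, rfl⟩
    exact Coloring.le_h2_of_avoids hc
end

section
/- Let G be a simple graph on the vertex set {1, …, N} with N ≥ 2. Then there exists a permutation σ of {1, …, N} such that, writing G' for the graph with edge set {σ(u)σ(v) : uv ∈ E(G)}, the number of common edges satisfies |E(G) ∩ E(G')| ≤ |E(G)|² / C(N, 2), where C(N, 2) = N(N−1)/2 is the binomial coefficient. -/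
/-!
Average over the group. If a finite group acts transitively on a finite set `O`, then for all
`a, b ∈ O` exactly the fraction `1 / |O|` of the group elements send `b` to `a`. Summing over the
pairs in `A × B`, the average of `|A ∩ g • B|` over the group is `|A| |B| / |O|`, so some `g` does
at least as well. A `2`-transitive group on `V`, such as the full symmetric group, acts transitively
on the `C(|V|, 2)` unordered pairs of distinct points, and edge sets are sets of such pairs.
-/

open Finset MulAction
open scoped Pointwise

section Averaging

variable {Γ X : Type*} [Group Γ] [MulAction Γ X] [DecidableEq X]

theorem card_inter_smul_eq_card_filter_product (A B : Finset X) (g : Γ) :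
    #(A ∩ g • B) = #{p ∈ A ×ˢ B | g • p.2 = p.1} := by
  refine card_nbij' (fun a => (a, g⁻¹ • a)) Prod.fst ?_ ?_ ?_ ?_ <;>
    grind [Set.MapsTo, Set.LeftInvOn, mem_smul_finset, smul_inv_smul, inv_smul_smul]

theorem card_filter_smul_eq_card_stabilizer [Fintype Γ] {a b : X} (hab : a ∈ orbit Γ b) :
    #{g : Γ | g • b = a} = Nat.card (stabilizer Γ b) := by
  obtain ⟨h, rfl⟩ := hab
  have translate (g : Γ) : g • b = h • b ↔ h⁻¹ * g ∈ stabilizer Γ b := by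
    rw [mem_stabilizer_iff, mul_smul, inv_smul_eq_iff]
  rw [← Fintype.card_subtype, ← Nat.card_eq_fintype_card]
  exact Nat.card_congr ((Equiv.mulLeft h⁻¹).subtypeEquiv translate)

theorem card_filter_smul_eq_mul_ncard_orbit [Fintype Γ] {a b : X} (hab : a ∈ orbit Γ b) :
    #{g : Γ | g • b = a} * (orbit Γ b).ncard = Fintype.card Γ := by
  rw [card_filter_smul_eq_card_stabilizer hab, ← index_stabilizer, Subgroup.card_mul_index,
    Nat.card_eq_fintype_card]

theorem sum_card_inter_smul_mul_ncard [Fintype Γ] {O : Set X} (hO : ∀ x ∈ O, orbit Γ x = O)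
    {A B : Finset X} (hA : ↑A ⊆ O) (hB : ↑B ⊆ O) :
    (∑ g : Γ, #(A ∩ g • B)) * O.ncard = Fintype.card Γ * (#A * #B) := by
  have fiber : ∀ p ∈ A ×ˢ B, #{g : Γ | g • p.2 = p.1} * O.ncard = Fintype.card Γ := by
    intro p hp
    obtain ⟨ha, hb⟩ := mem_product.mp hp
    have orbit_eq : orbit Γ p.2 = O := hO _ (hB hb)
    rw [← orbit_eq]
    exact card_filter_smul_eq_mul_ncard_orbit (orbit_eq ▸ hA ha)
  calc (∑ g : Γ, #(A ∩ g • B)) * O.ncard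
      = (∑ g : Γ, #{p ∈ A ×ˢ B | g • p.2 = p.1}) * O.ncard := by
        simp only [card_inter_smul_eq_card_filter_product]
    _ = (∑ p ∈ A ×ˢ B, #{g : Γ | g • p.2 = p.1}) * O.ncard :=
        congrArg (· * O.ncard) (sum_card_bipartiteAbove_eq_sum_card_bipartiteBelow _)
    _ = Fintype.card Γ * (#A * #B) := by
        rw [sum_mul, sum_congr rfl fiber, sum_const, card_product, smul_eq_mul, mul_comm]

theorem exists_card_inter_smul_mul_ncard_le [Finite Γ] {O : Set X} (hO : ∀ x ∈ O, orbit Γ x = O)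
    {A B : Finset X} (hA : ↑A ⊆ O) (hB : ↑B ⊆ O) :
    ∃ g : Γ, #(A ∩ g • B) * O.ncard ≤ #A * #B := by
  cases nonempty_fintype Γ
  have average : ∑ g : Γ, #(A ∩ g • B) * O.ncard ≤ ∑ _g : Γ, #A * #B := by
    rw [← sum_mul, sum_card_inter_smul_mul_ncard hO hA hB, sum_const, card_univ, smul_eq_mul]
  obtain ⟨g, -, hg⟩ := exists_le_of_sum_le univ_nonempty average
  exact ⟨g, hg⟩

end Averaging

section UnorderedPairs

variable {Γ V : Type*} [Group Γ] [MulAction Γ V]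

/-- The diagonal action of a group on the unordered pairs of points of a set it acts on, in which
`g • s(u, v) = s(g • u, g • v)`; on edges it is the relabelling of vertices by `g`. -/
instance instMulActionSym2 : MulAction Γ (Sym2 V) where
  smul g := Sym2.map (g • ·)
  one_smul e := by
    change Sym2.map ((1 : Γ) • ·) e = e
    simp
  mul_smul g h e := by
    change Sym2.map ((g * h) • ·) e = Sym2.map (g • ·) (Sym2.map (h • ·) e)
    simp only [Sym2.map_map, Function.comp_def, mul_smul]

theorem smul_sym2_eq_map (g : Γ) (e : Sym2 V) : g • e = e.map (g • ·) := rfl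

theorem isDiag_smul_iff (g : Γ) (e : Sym2 V) : (g • e).IsDiag ↔ e.IsDiag :=
  Sym2.isDiag_map (MulAction.injective g)

theorem orbit_eq_compl_diagSet [IsMultiplyPretransitive Γ V 2] {e : Sym2 V}
    (he : e ∈ (Sym2.diagSetᶜ : Set (Sym2 V))) : orbit Γ e = Sym2.diagSetᶜ := by
  ext f
  constructor
  · rintro ⟨g, rfl⟩
    exact mt (isDiag_smul_iff g e).mp he
  · intro hf
    induction e with | _ a b
    induction f with | _ c d
    obtain ⟨g, hac, hbd⟩ := is_two_pretransitive_iff (G := Γ).mp inferInstance he hf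
    exact ⟨g, by simp only [smul_sym2_eq_map, Sym2.map_mk, hac, hbd]⟩

theorem edgeSet_map_smul (G : SimpleGraph V) (g : Γ) :
    (G.map (g • ·)).edgeSet = g • G.edgeSet :=
  G.edgeSet_map (MulAction.toPerm g).toEmbedding

theorem ncard_compl_diagSet_eq_choose_two [Fintype V] :
    (Sym2.diagSetᶜ : Set (Sym2 V)).ncard = (Fintype.card V).choose 2 := by
  classical
  rw [← Nat.card_coe_set_eq, Nat.card_eq_fintype_card, Sym2.card_diagSet_compl]

end UnorderedPairs

theorem stmt19_general {Γ V : Type*} [Group Γ] [Finite Γ] [Fintype V] [MulAction Γ V]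
    [IsMultiplyPretransitive Γ V 2] (G H : SimpleGraph V) :
    ∃ g : Γ, (G.edgeSet ∩ (H.map (g • ·)).edgeSet).ncard * (Fintype.card V).choose 2 ≤
      G.edgeSet.ncard * H.edgeSet.ncard := by
  classical
  have edges_subset (K : SimpleGraph V) : (K.edgeFinset : Set (Sym2 V)) ⊆ Sym2.diagSetᶜ := by
    rw [K.coe_edgeFinset]
    exact fun _ => K.not_isDiag_of_mem_edgeSet
  obtain ⟨g, hg⟩ := exists_card_inter_smul_mul_ncard_le (Γ := Γ)
    (fun _ => orbit_eq_compl_diagSet) (edges_subset G) (edges_subset H)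
  refine ⟨g, ?_⟩
  simpa only [← Set.ncard_coe_finset, coe_inter, coe_smul_finset, SimpleGraph.coe_edgeFinset,
    ncard_compl_diagSet_eq_choose_two, edgeSet_map_smul] using hg

theorem stmt19 (N : ℕ) (hN : 2 ≤ N) (G : SimpleGraph (Fin N)) :
    ∃ σ : Equiv.Perm (Fin N),
      ((G.edgeSet ∩ (G.map σ.toEmbedding).edgeSet).ncard : ℝ) ≤
        (G.edgeSet.ncard : ℝ) ^ 2 / (N.choose 2 : ℝ) := by
  have := Equiv.Perm.isMultiplyPretransitive (Fin N) 2
  obtain ⟨σ, hσ⟩ := stmt19_general (Γ := Equiv.Perm (Fin N)) G G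
  rw [Fintype.card_fin, ← sq] at hσ
  exact ⟨σ, (le_div_iff₀ (mod_cast Nat.choose_pos hN)).mpr (mod_cast hσ)⟩
end
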